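/- Let μ0 and μ' be stable matchings such that μ' covers μ0 in the woman-dominance order, and let w be any woman with μ'(w) ≻_w μ0(w). Then μ' is the minimum, in the woman-dominance order, of the set of stable matchings μ satisfying μ ≥ μ0 and μ(w) ≻_w μ0(w). -/

import Mathlib

/-- A matching market: men `M` and women `W`; each man has a strict preference
order over `W ∪ {∅}` and each woman over `M ∪ {∅}`, encoded by injective rank
functions (a strictly higher rank means strictly more preferred); `none`
plays the role of `∅` (being unmatched), and partners ranked below `none`
are unacceptable. -/
structure Market (M W : Type*) where
  mRank : M → Option W → ℕ
  wRank : W → Option M → ℕ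
  mRank_inj : ∀ m, Function.Injective (mRank m)
  wRank_inj : ∀ w, Function.Injective (wRank w)

/-- A matching: `mu` assigns each man a woman or `none`, `nu` assigns each
woman a man or `none`, and `μ(m) = w ↔ μ(w) = m`. -/
structure Matching (M W : Type*) where
  mu : M → Option W
  nu : W → Option M
  consistent : ∀ m w, mu m = some w ↔ nu w = some m

variable {M W : Type*}

/-- Every matched agent prefers their partner to `∅`. -/
def Market.IndivRational (mkt : Market M W) (μ : Matching M W) : Prop :=
  (∀ m w, μ.mu m = some w → mkt.mRank m none < mkt.mRank m (some w)) ∧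
  (∀ w m, μ.nu w = some m → mkt.wRank w none < mkt.wRank w (some m))

/-- `(m, w)` is a blocking pair for `μ`: they are not matched to each other,
`w ≻_m μ(m)` and `m ≻_w μ(w)`. -/
def Market.Blocking (mkt : Market M W) (μ : Matching M W) (m : M) (w : W) : Prop :=
  μ.mu m ≠ some w ∧
  mkt.mRank m (μ.mu m) < mkt.mRank m (some w) ∧
  mkt.wRank w (μ.nu w) < mkt.wRank w (some m)

/-- A matching is stable if it is individually rational and has no blocking pair. -/
def Market.Stable (mkt : Market M W) (μ : Matching M W) : Prop :=
  mkt.IndivRational μ ∧ ∀ m w, ¬ mkt.Blocking μ m w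

/-- Woman-dominance: `μ ≥ μ'` iff every woman weakly prefers her partner in `μ`. -/
def Market.Dom (mkt : Market M W) (μ μ' : Matching M W) : Prop :=
  ∀ w, mkt.wRank w (μ'.nu w) ≤ mkt.wRank w (μ.nu w)

/-- Strict woman-dominance: `μ > μ'`. -/
def Market.StrictDom (mkt : Market M W) (μ μ' : Matching M W) : Prop :=
  mkt.Dom μ μ' ∧ μ ≠ μ'

/-- `μ'` covers `μ` in the woman-dominance order on stable matchings. -/
def Market.Covers (mkt : Market M W) (μ' μ : Matching M W) : Prop :=
  mkt.StrictDom μ' μ ∧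
  ¬ ∃ μ'' : Matching M W, mkt.Stable μ'' ∧ mkt.StrictDom μ' μ'' ∧ mkt.StrictDom μ'' μ

/-- `μ'` is the elimination of the list `ρ = [(w_0,m_0),…,(w_{k-1},m_{k-1})]`
from `μ`: `k ≥ 2`, the women (resp. men) in `ρ` are distinct, `μ(w_i) = m_i`,
`μ'(m_i) = w_{(i+1) mod k}`, and every agent not appearing in `ρ` has the same
partner in `μ` and `μ'`. -/
def Matching.IsElimOf (μ' μ : Matching M W) (ρ : List (W × M)) : Prop :=
  2 ≤ ρ.length ∧
  (ρ.map Prod.fst).Nodup ∧ (ρ.map Prod.snd).Nodup ∧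
  (∀ i : Fin ρ.length, μ.nu (ρ.get i).1 = some (ρ.get i).2) ∧
  (∀ i : Fin ρ.length, μ'.mu (ρ.get i).2 =
    some (ρ.get ⟨(i.1 + 1) % ρ.length,
      Nat.mod_lt _ (Nat.lt_of_le_of_lt (Nat.zero_le _) i.isLt)⟩).1) ∧
  (∀ m : M, m ∉ ρ.map Prod.snd → μ'.mu m = μ.mu m) ∧
  (∀ w : W, w ∉ ρ.map Prod.fst → μ'.nu w = μ.nu w)

/-- `ρ` is a rotation exposed in `μ`: the elimination of `ρ` from `μ` is a
stable matching which covers `μ`. -/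
def Market.ExposedRotation (mkt : Market M W) (μ : Matching M W) (ρ : List (W × M)) : Prop :=
  ∃ μ' : Matching M W, Matching.IsElimOf μ' μ ρ ∧ mkt.Stable μ' ∧ mkt.Covers μ' μ

/-- `ρ` belongs to the set `Π` of all rotations, i.e. it is exposed in some
stable matching. -/
def Market.InPi (mkt : Market M W) (ρ : List (W × M)) : Prop :=
  ∃ μ : Matching M W, mkt.Stable μ ∧ mkt.ExposedRotation μ ρ

/-- The cyclically next index in a rotation. -/
def RotNext (ρ : List (W × M)) (i : Fin ρ.length) : Fin ρ.length :=
  ⟨(i.1 + 1) % ρ.length, Nat.mod_lt _ (Nat.lt_of_le_of_lt (Nat.zero_le _) i.isLt)⟩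

/-- The cyclically previous index in a rotation. -/
def RotPrev (ρ : List (W × M)) (i : Fin ρ.length) : Fin ρ.length :=
  ⟨(i.1 + ρ.length - 1) % ρ.length, Nat.mod_lt _ (Nat.lt_of_le_of_lt (Nat.zero_le _) i.isLt)⟩

/-- `ρ` moves man `m` from `w` to `w'` (i.e. `m = m_i`, `w = w_i`, `w' = w_{i+1}`). -/
def MovesManFromTo (ρ : List (W × M)) (m : M) (w w' : W) : Prop :=
  ∃ i : Fin ρ.length, (ρ.get i).2 = m ∧ (ρ.get i).1 = w ∧ (ρ.get (RotNext ρ i)).1 = w'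

/-- `ρ` moves woman `w` from `m` to `m'` (i.e. `w = w_i`, `m = m_i`, `m' = m_{i-1}`). -/
def MovesWomanFromTo (ρ : List (W × M)) (w : W) (m m' : M) : Prop :=
  ∃ i : Fin ρ.length, (ρ.get i).1 = w ∧ (ρ.get i).2 = m ∧ (ρ.get (RotPrev ρ i)).2 = m'

/-- `ρ1` is a type 1 predecessor of `ρ2`: `ρ1` moves some man `m` to a woman
`w` and the pair `(w, m)` appears in `ρ2`. -/
def Market.Type1Pred (_mkt : Market M W) (ρ1 ρ2 : List (W × M)) : Prop :=
  ∃ (w : W) (m : M), (∃ w0 : W, MovesManFromTo ρ1 m w0 w) ∧ (w, m) ∈ ρ2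

/-- `ρ1` is a type 2 predecessor of `ρ2`: `ρ1` moves some woman `w` from a man
strictly below `m` to a man strictly above `m`, and `ρ2` moves `m` from a woman
strictly above `w` to a woman strictly below `w`. -/
def Market.Type2Pred (mkt : Market M W) (ρ1 ρ2 : List (W × M)) : Prop :=
  ∃ (m : M) (w : W) (mlo mhi : M) (whi wlo : W),
    MovesWomanFromTo ρ1 w mlo mhi ∧
    mkt.wRank w (some mlo) < mkt.wRank w (some m) ∧
    mkt.wRank w (some m) < mkt.wRank w (some mhi) ∧
    MovesManFromTo ρ2 m whi wlo ∧
    mkt.mRank m (some wlo) < mkt.mRank m (some w) ∧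
    mkt.mRank m (some w) < mkt.mRank m (some whi)

/-- `ρ1` is a (type 1 or type 2) predecessor of `ρ2`; these are the edges of
the predecessor graph `G(Π)`. -/
def Market.Pred (mkt : Market M W) (ρ1 ρ2 : List (W × M)) : Prop :=
  mkt.Type1Pred ρ1 ρ2 ∨ mkt.Type2Pred ρ1 ρ2

/-- `σ` assigns each woman the more preferred of her partners in `μ` and `μ'`. -/
def Market.IsJoin (mkt : Market M W) (μ μ' σ : Matching M W) : Prop :=
  ∀ w, σ.nu w = if mkt.wRank w (μ'.nu w) ≤ mkt.wRank w (μ.nu w) then μ.nu w else μ'.nu w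

/-- `σ` assigns each woman the less preferred of her partners in `μ` and `μ'`. -/
def Market.IsMeet (mkt : Market M W) (μ μ' σ : Matching M W) : Prop :=
  ∀ w, σ.nu w = if mkt.wRank w (μ.nu w) ≤ mkt.wRank w (μ'.nu w) then μ.nu w else μ'.nu w

/-! Let `μ ≥ μ0` be stable with `μ(w) ≻_w μ0(w)`, and let `σ` be the meet of `μ` and `μ'`. Then
`μ' ≥ σ ≥ μ0`, and `σ ≠ μ0` because `w` is better off in `σ`, so the cover relation forces
`σ = μ'`, whence `μ ≥ μ'`.

To build the meet of two stable matchings `μ` and `μ'`, let `P` be the set of men who prefer `μ` and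
`B` the set of women who prefer `μ'`. As neither matching is blocked, `μ` sends `P` injectively into
`B` and `μ'` sends `B` injectively into `P`. If `B` is finite both maps are bijections, so both
matchings match `P` with `B` and nobody else with either, and one may follow `μ` on `P ∪ B` and
`μ'` elsewhere. -/

namespace Matching

/-- The same matching with the roles of men and women exchanged. Together with `Market.swap` it
yields the man-side or woman-side version of a lemma from the other one. -/
def swap (μ : Matching M W) : Matching W M where
  mu := μ.nu
  nu := μ.mu
  consistent w m := (μ.consistent m w).symm

theorem eq_of_mu_eq_some {μ : Matching M W} {m m' : M} {w : W} (h : μ.mu m = some w)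
    (h' : μ.mu m' = some w) : m = m' :=
  Option.some.inj (((μ.consistent m w).1 h).symm.trans ((μ.consistent m' w).1 h'))

theorem injOn_mu {μ : Matching M W} {s : Set M} {t : Set W} (h : μ.mu '' s ⊆ some '' t) :
    s.InjOn μ.mu := by
  intro m hm m' _ heq
  obtain ⟨w, _, hw⟩ := h ⟨m, hm, rfl⟩
  exact eq_of_mu_eq_some hw.symm (heq.symm.trans hw.symm)

theorem encard_le_of_mu_image_subset {μ : Matching M W} {s : Set M} {t : Set W}
    (h : μ.mu '' s ⊆ some '' t) : s.encard ≤ t.encard :=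
  calc s.encard = (μ.mu '' s).encard := (injOn_mu h).encard_image.symm
    _ ≤ (some '' t).encard := Set.encard_le_encard h
    _ = t.encard := (Option.some_injective W).encard_image t

open Classical in
/-- The matching that follows `μ` on the men in `P` and the women in `B`, and `μ'` on all others. -/
noncomputable def splice (μ μ' : Matching M W) (P : Set M) (B : Set W)
    (hμ : ∀ m w, μ.mu m = some w → (m ∈ P ↔ w ∈ B))
    (hμ' : ∀ m w, μ'.mu m = some w → (m ∈ P ↔ w ∈ B)) : Matching M W where
  mu m := if m ∈ P then μ.mu m else μ'.mu m
  nu w := if w ∈ B then μ.nu w else μ'.nu w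
  consistent m w := by
    have hiff := hμ m w
    have hiff' := hμ' m w
    rw [μ.consistent] at hiff
    rw [μ'.consistent] at hiff'
    split_ifs with hm hw hw
    · exact μ.consistent m w
    · rw [μ.consistent]; tauto
    · rw [μ'.consistent]; tauto
    · exact μ'.consistent m w

end Matching

namespace Market

variable {mkt : Market M W} {μ μ' σ : Matching M W}

/-- The same market with the roles of men and women exchanged. -/
def swap (mkt : Market M W) : Market W M where
  mRank := mkt.wRank
  wRank := mkt.mRank
  mRank_inj := mkt.wRank_inj
  wRank_inj := mkt.mRank_inj

/-- The set of men who strictly prefer their partner in `μ` to their partner in `μ'`. -/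
def menPreferring (mkt : Market M W) (μ μ' : Matching M W) : Set M :=
  {m | mkt.mRank m (μ'.mu m) < mkt.mRank m (μ.mu m)}

/-- The set of women who strictly prefer their partner in `μ` to their partner in `μ'`. -/
def womenPreferring (mkt : Market M W) (μ μ' : Matching M W) : Set W :=
  {w | mkt.wRank w (μ'.nu w) < mkt.wRank w (μ.nu w)}

theorem indivRational_iff :
    mkt.IndivRational μ ↔ (∀ m, mkt.mRank m none ≤ mkt.mRank m (μ.mu m)) ∧
      ∀ w, mkt.wRank w none ≤ mkt.wRank w (μ.nu w) := by
  refine ⟨fun h => ⟨fun m => ?_, fun w => ?_⟩, fun h => ⟨fun m w hm => ?_, fun w m hw => ?_⟩⟩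
  · cases hm : μ.mu m with
    | none => exact le_rfl
    | some w => exact (h.1 m w hm).le
  · cases hw : μ.nu w with
    | none => exact le_rfl
    | some m => exact (h.2 w m hw).le
  · exact (hm ▸ h.1 m).lt_of_ne ((mkt.mRank_inj m).ne nofun)
  · exact (hw ▸ h.2 w).lt_of_ne ((mkt.wRank_inj w).ne nofun)

theorem Stable.swap (h : mkt.Stable μ) : mkt.swap.Stable μ.swap :=
  ⟨⟨h.1.2, h.1.1⟩, fun w m hblock =>
    h.2 m w ⟨mt (μ.consistent m w).1 hblock.1, hblock.2.2, hblock.2.1⟩⟩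

theorem Stable.wRank_lt_of_mRank_lt (h : mkt.Stable μ) {m : M} {w : W}
    (hm : mkt.mRank m (μ.mu m) < mkt.mRank m (some w)) :
    mkt.wRank w (some m) < mkt.wRank w (μ.nu w) := by
  have hne : μ.mu m ≠ some w := ne_of_apply_ne (mkt.mRank m) hm.ne
  have hle : mkt.wRank w (some m) ≤ mkt.wRank w (μ.nu w) :=
    le_of_not_gt fun hw => h.2 m w ⟨hne, hm, hw⟩
  exact hle.lt_of_ne fun heq => hne ((μ.consistent m w).2 (mkt.wRank_inj w heq).symm)

theorem Stable.mu_image_menPreferring_subset (h' : mkt.Stable μ') :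
    μ.mu '' mkt.menPreferring μ μ' ⊆ some '' mkt.womenPreferring μ' μ := by
  rintro _ ⟨m, hm : mkt.mRank m (μ'.mu m) < mkt.mRank m (μ.mu m), rfl⟩
  cases hw : μ.mu m with
  | none => exact absurd (hw ▸ hm) ((indivRational_iff.1 h'.1).1 m).not_gt
  | some w =>
    refine ⟨w, ?_, rfl⟩
    change mkt.wRank w (μ.nu w) < mkt.wRank w (μ'.nu w)
    rw [(μ.consistent m w).1 hw]
    exact h'.wRank_lt_of_mRank_lt (hw ▸ hm)

theorem Stable.nu_image_womenPreferring_subset (h : mkt.Stable μ) :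
    μ'.nu '' mkt.womenPreferring μ' μ ⊆ some '' mkt.menPreferring μ μ' :=
  h.swap.mu_image_menPreferring_subset (μ := μ'.swap)

theorem Stable.encard_menPreferring (h : mkt.Stable μ) (h' : mkt.Stable μ') :
    (mkt.menPreferring μ μ').encard = (mkt.womenPreferring μ' μ).encard :=
  le_antisymm (Matching.encard_le_of_mu_image_subset h'.mu_image_menPreferring_subset)
    (Matching.encard_le_of_mu_image_subset (μ := μ'.swap) h.nu_image_womenPreferring_subset)

theorem Stable.mu_image_menPreferring (h : mkt.Stable μ) (h' : mkt.Stable μ')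
    (hfin : (mkt.womenPreferring μ' μ).Finite) :
    μ.mu '' mkt.menPreferring μ μ' = some '' mkt.womenPreferring μ' μ := by
  have hsub := h'.mu_image_menPreferring_subset (μ := μ)
  refine (hfin.image some).eq_of_subset_of_encard_le' hsub ?_
  rw [(Matching.injOn_mu hsub).encard_image, (Option.some_injective W).encard_image,
    h.encard_menPreferring h']

theorem Stable.nu_image_womenPreferring (h : mkt.Stable μ) (h' : mkt.Stable μ')
    (hfin : (mkt.menPreferring μ μ').Finite) :
    μ'.nu '' mkt.womenPreferring μ' μ = some '' mkt.menPreferring μ μ' :=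
  h'.swap.mu_image_menPreferring h.swap hfin

theorem Stable.mem_menPreferring_iff_of_mu_left (h : mkt.Stable μ) (h' : mkt.Stable μ')
    (hfin : (mkt.womenPreferring μ' μ).Finite) {m : M} {w : W} (hmw : μ.mu m = some w) :
    m ∈ mkt.menPreferring μ μ' ↔ w ∈ mkt.womenPreferring μ' μ := by
  rw [← (Option.some_injective W).mem_set_image, ← h.mu_image_menPreferring h' hfin]
  refine ⟨fun hm => ⟨m, hm, hmw⟩, ?_⟩
  rintro ⟨m', hm', hm'w⟩
  rwa [Matching.eq_of_mu_eq_some hmw hm'w]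

theorem Stable.mem_menPreferring_iff_of_mu_right (h : mkt.Stable μ) (h' : mkt.Stable μ')
    (hfin : (mkt.womenPreferring μ' μ).Finite) {m : M} {w : W} (hmw : μ'.mu m = some w) :
    m ∈ mkt.menPreferring μ μ' ↔ w ∈ mkt.womenPreferring μ' μ := by
  have hfin' : (mkt.menPreferring μ μ').Finite :=
    Set.encard_lt_top_iff.1 (h.encard_menPreferring h' ▸ hfin.encard_lt_top)
  exact (h'.swap.mem_menPreferring_iff_of_mu_left h.swap hfin' ((μ'.consistent m w).1 hmw)).symm

theorem Stable.of_le_mRank (h : mkt.Stable μ) (h' : mkt.Stable μ')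
    (hmen : ∀ m, mkt.mRank m (μ.mu m) ≤ mkt.mRank m (σ.mu m))
    (hmen' : ∀ m, mkt.mRank m (μ'.mu m) ≤ mkt.mRank m (σ.mu m))
    (hwomen : ∀ w, σ.nu w = μ.nu w ∨ σ.nu w = μ'.nu w) : mkt.Stable σ := by
  have hir := indivRational_iff.1 h.1
  have hir' := indivRational_iff.1 h'.1
  refine ⟨indivRational_iff.2 ⟨fun m => (hir.1 m).trans (hmen m), fun w => ?_⟩, ?_⟩
  · rcases hwomen w with hw | hw <;> rw [hw]
    exacts [hir.2 w, hir'.2 w]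
  · rintro m w ⟨_, hm, hw⟩
    rcases hwomen w with heq | heq <;> rw [heq] at hw
    · exact hw.asymm (h.wRank_lt_of_mRank_lt ((hmen m).trans_lt hm))
    · exact hw.asymm (h'.wRank_lt_of_mRank_lt ((hmen' m).trans_lt hm))

theorem Stable.exists_stable_isMeet (h : mkt.Stable μ) (h' : mkt.Stable μ')
    (hfin : (mkt.womenPreferring μ' μ).Finite) :
    ∃ σ : Matching M W, mkt.Stable σ ∧ mkt.IsMeet μ μ' σ := by
  classical
  let σ := μ.splice μ' (mkt.menPreferring μ μ') (mkt.womenPreferring μ' μ)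
    (fun _ _ => h.mem_menPreferring_iff_of_mu_left h' hfin)
    (fun _ _ => h.mem_menPreferring_iff_of_mu_right h' hfin)
  have hmu (m) : σ.mu m = if m ∈ mkt.menPreferring μ μ' then μ.mu m else μ'.mu m := rfl
  have hnu (w) : σ.nu w = if w ∈ mkt.womenPreferring μ' μ then μ.nu w else μ'.nu w := rfl
  refine ⟨σ, h.of_le_mRank h' (fun m => ?_) (fun m => ?_) (fun w => ?_), fun w => ?_⟩
  · rw [hmu]
    split_ifs with hm
    exacts [le_rfl, not_lt.1 hm]
  · rw [hmu]
    split_ifs with hm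
    exacts [le_of_lt hm, le_rfl]
  · exact ite_eq_or_eq _ _ _
  · rw [hnu]
    by_cases hw : w ∈ mkt.womenPreferring μ' μ
    · rw [if_pos hw, if_pos (le_of_lt hw)]
    · have hle : mkt.wRank w (μ'.nu w) ≤ mkt.wRank w (μ.nu w) := not_lt.1 hw
      rw [if_neg hw]
      rcases hle.lt_or_eq with hlt | heq
      · rw [if_neg hlt.not_ge]
      · rw [mkt.wRank_inj w heq, ite_self]

theorem IsMeet.wRank_eq_min (h : mkt.IsMeet μ μ' σ) (w : W) :
    mkt.wRank w (σ.nu w) = min (mkt.wRank w (μ.nu w)) (mkt.wRank w (μ'.nu w)) := by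
  rw [h w, apply_ite (mkt.wRank w), min_def]

theorem IsMeet.dom_left (h : mkt.IsMeet μ μ' σ) : mkt.Dom μ σ :=
  fun w => (h.wRank_eq_min w).trans_le (min_le_left _ _)

theorem IsMeet.dom_right (h : mkt.IsMeet μ μ' σ) : mkt.Dom μ' σ :=
  fun w => (h.wRank_eq_min w).trans_le (min_le_right _ _)

theorem IsMeet.dom_of_dom {τ : Matching M W} (h : mkt.IsMeet μ μ' σ) (hμ : mkt.Dom μ τ)
    (hμ' : mkt.Dom μ' τ) : mkt.Dom σ τ :=
  fun w => (le_min (hμ w) (hμ' w)).trans_eq (h.wRank_eq_min w).symm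

theorem Covers.eq_of_dom (hcov : mkt.Covers μ' μ) (hσ : mkt.Stable σ) (hle : mkt.Dom μ' σ)
    (hge : mkt.Dom σ μ) (hne : σ ≠ μ) : μ' = σ :=
  by_contra fun hne' => hcov.2 ⟨σ, hσ, ⟨hle, hne'⟩, hge, hne⟩

theorem Dom.womenPreferring_subset (h : mkt.Dom μ σ) :
    mkt.womenPreferring μ' μ ⊆ {w | μ'.nu w ≠ σ.nu w} := by
  intro w hw heq
  exact (heq ▸ h w).not_gt hw

end Market

theorem cover_is_minimum_improvement_general (mkt : Market M W) (μ0 μ' : Matching M W)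
    (h' : mkt.Stable μ') (hcov : mkt.Covers μ' μ0) (hfin : {v | μ'.nu v ≠ μ0.nu v}.Finite)
    (w : W) (hw : mkt.wRank w (μ0.nu w) < mkt.wRank w (μ'.nu w)) :
    (mkt.Stable μ' ∧ mkt.Dom μ' μ0 ∧ mkt.wRank w (μ0.nu w) < mkt.wRank w (μ'.nu w)) ∧
    ∀ μ : Matching M W, mkt.Stable μ → mkt.Dom μ μ0 →
      mkt.wRank w (μ0.nu w) < mkt.wRank w (μ.nu w) → mkt.Dom μ μ' := by
  refine ⟨⟨h', hcov.1.1, hw⟩, fun μ hμ hdom hμw => ?_⟩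
  obtain ⟨σ, hσ, hmeet⟩ := hμ.exists_stable_isMeet h' (hfin.subset hdom.womenPreferring_subset)
  have hσw : mkt.wRank w (μ0.nu w) < mkt.wRank w (σ.nu w) :=
    (lt_min hμw hw).trans_eq (hmeet.wRank_eq_min w).symm
  have hσ_ne : σ ≠ μ0 := fun heq => hσw.ne (heq ▸ rfl)
  obtain rfl : μ' = σ :=
    hcov.eq_of_dom hσ hmeet.dom_right (hmeet.dom_of_dom hdom hcov.1.1) hσ_ne
  exact hmeet.dom_left

/-- if the stable matching `μ'` covers `μ0` and `μ'(w) ≻_w μ0(w)`,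
then `μ'` is the minimum, in the woman-dominance order, of the set of stable
matchings `μ` with `μ ≥ μ0` and `μ(w) ≻_w μ0(w)`. -/
theorem cover_is_minimum_improvement {M W : Type*} [Fintype M] [Fintype W]
    (mkt : Market M W) (μ0 μ' : Matching M W)
    (h0 : mkt.Stable μ0) (h' : mkt.Stable μ') (hcov : mkt.Covers μ' μ0)
    (w : W) (hw : mkt.wRank w (μ0.nu w) < mkt.wRank w (μ'.nu w)) :
    (mkt.Stable μ' ∧ mkt.Dom μ' μ0 ∧ mkt.wRank w (μ0.nu w) < mkt.wRank w (μ'.nu w)) ∧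
    ∀ μ : Matching M W, mkt.Stable μ → mkt.Dom μ μ0 →
      mkt.wRank w (μ0.nu w) < mkt.wRank w (μ.nu w) → mkt.Dom μ μ' :=
  cover_is_minimum_improvement_general mkt μ0 μ' h' hcov (Set.toFinite _) w hw
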